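/- Let (G, G⁺, Δ) be a support-preserving LCM-Garside structure satisfying homogeneity and square-freeness, and such that for every saturated X ⊆ 𝒜 some positive power of Δ_X is central in G_X. Let B₁ and B₂ be parabolic subgroups of G. Then for every c ∈ G, c⁻¹B₁c = B₂ if and only if c⁻¹ z_{B₁} c = z_{B₂}. -/

import Mathlib

open scoped Pointwise Classical

/-- A Garside structure on a group `G`: a submonoid `pos` of positive elements with
trivial units, prefix and suffix lattice operations, and a Garside element `delta`. -/
structure GarsideStructure (G : Type*) [Group G] where
  /-- the submonoid of positive elements -/
  pos : Submonoid G
  /-- the Garside element Δ -/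
  delta : G
  /-- meet for the prefix order -/
  meet : G → G → G
  /-- join for the prefix order -/
  join : G → G → G
  /-- meet for the suffix order -/
  rmeet : G → G → G
  /-- join for the suffix order -/
  rjoin : G → G → G
  units_triv : ∀ a : G, a ∈ pos → a⁻¹ ∈ pos → a = 1
  meet_le_left : ∀ a b : G, (meet a b)⁻¹ * a ∈ pos
  meet_le_right : ∀ a b : G, (meet a b)⁻¹ * b ∈ pos
  le_meet : ∀ a b c : G, c⁻¹ * a ∈ pos → c⁻¹ * b ∈ pos → c⁻¹ * meet a b ∈ pos
  le_join_left : ∀ a b : G, a⁻¹ * join a b ∈ pos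
  le_join_right : ∀ a b : G, b⁻¹ * join a b ∈ pos
  join_le : ∀ a b c : G, a⁻¹ * c ∈ pos → b⁻¹ * c ∈ pos → (join a b)⁻¹ * c ∈ pos
  rmeet_le_left : ∀ a b : G, a * (rmeet a b)⁻¹ ∈ pos
  rmeet_le_right : ∀ a b : G, b * (rmeet a b)⁻¹ ∈ pos
  le_rmeet : ∀ a b c : G, a * c⁻¹ ∈ pos → b * c⁻¹ ∈ pos → rmeet a b * c⁻¹ ∈ pos
  rjoin_le_left : ∀ a b : G, rjoin a b * a⁻¹ ∈ pos
  rjoin_le_right : ∀ a b : G, rjoin a b * b⁻¹ ∈ pos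
  rjoin_le : ∀ a b c : G, c * a⁻¹ ∈ pos → c * b⁻¹ ∈ pos → c * (rjoin a b)⁻¹ ∈ pos
  delta_pos : delta ∈ pos
  /-- Δ is balanced: its positive prefixes coincide with its positive suffixes -/
  delta_balanced : ∀ s : G, s ∈ pos → (s⁻¹ * delta ∈ pos ↔ delta * s⁻¹ ∈ pos)
  /-- the set of simple elements (divisors of Δ) is finite -/
  divDelta_finite : {s : G | s ∈ pos ∧ s⁻¹ * delta ∈ pos}.Finite
  /-- the simple elements generate `G` -/
  divDelta_generates : Subgroup.closure {s : G | s ∈ pos ∧ s⁻¹ * delta ∈ pos} = ⊤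
  /-- the atoms generate the positive monoid -/
  atoms_generate :
    Submonoid.closure {a : G | a ∈ pos ∧ a ≠ 1 ∧
      ∀ b ∈ pos, b⁻¹ * a ∈ pos → b = 1 ∨ b = a} = pos
  /-- every atom divides Δ -/
  atoms_divide_delta : ∀ a : G, a ∈ pos → a ≠ 1 →
    (∀ b ∈ pos, b⁻¹ * a ∈ pos → b = 1 ∨ b = a) → a⁻¹ * delta ∈ pos
  /-- every element is bounded below and above by powers of Δ -/
  delta_bounds : ∀ x : G, ∃ p q : ℤ, p ≤ q ∧ (delta ^ p)⁻¹ * x ∈ pos ∧ x⁻¹ * delta ^ q ∈ pos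
  /-- conjugation by Δ maps the positive monoid bijectively onto itself -/
  conj_delta : ∀ a : G, a ∈ pos ↔ delta * a * delta⁻¹ ∈ pos
  /-- some positive power of Δ is central -/
  central_power : ∃ n : ℕ, 0 < n ∧ delta ^ n ∈ Subgroup.center G
  /-- no infinite strictly decreasing (for the prefix order) sequence of positive elements -/
  no_infinite_descent : ¬ ∃ f : ℕ → G, (∀ n, f n ∈ pos) ∧
    ∀ n, (f (n + 1))⁻¹ * f n ∈ pos ∧ f (n + 1) ≠ f n

namespace GarsideStructure

variable {G : Type*} [Group G] (S : GarsideStructure G)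

/-- the prefix order: `a ≼ b` iff `a⁻¹ * b` is positive -/
def le (a b : G) : Prop := a⁻¹ * b ∈ S.pos

/-- the set of positive prefixes of an element -/
def Div (d : G) : Set G := {s : G | s ∈ S.pos ∧ S.le s d}

/-- atoms: nontrivial positive elements with no nontrivial proper positive prefix -/
def IsAtomic (a : G) : Prop :=
  a ∈ S.pos ∧ a ≠ 1 ∧ ∀ b ∈ S.pos, S.le b a → b = 1 ∨ b = a

/-- the set of atoms -/
def atoms : Set G := {a : G | S.IsAtomic a}

/-- the left denominator of `x`: `D_L x = (1 ∧ x)⁻¹` -/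
def DL (x : G) : G := (S.meet 1 x)⁻¹

/-- the left numerator of `x`: `N_L x = D_L x * x` -/
def NL (x : G) : G := S.DL x * x

/-- the (left) swap `φ(x) = N_L x * (D_L x)⁻¹ = D_L x * x * (D_L x)⁻¹` -/
def swap (x : G) : G := S.DL x * x * (S.DL x)⁻¹

/-- an element is recurrent if it is fixed by some positive iterate of the swap map -/
def Recurrent (x : G) : Prop := ∃ m : ℕ, 0 < m ∧ S.swap^[m] x = x

/-- the set `R(x)` of recurrent conjugates of `x` -/
def Rset (x : G) : Set G := {y : G | IsConj x y ∧ S.Recurrent y}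

/-- the set `C⁺(x)` of positive conjugates of `x` -/
def Cpos (x : G) : Set G := {y : G | IsConj x y ∧ y ∈ S.pos}

/-- the set `C⁻(x)` of negative conjugates of `x` -/
def Cneg (x : G) : Set G := {y : G | IsConj x y ∧ y⁻¹ ∈ S.pos}

/-- the transport of `u` at `y`: with `y = a⁻¹ b` reduced, `u^{(1)} = (a u) ∧ (b u)` -/
def transport (y u : G) : G := S.meet (S.DL y * u) (S.NL y * u)

/-- `Δ_X`: the least upper bound for the prefix order of a set `X` (`1` if there is none) -/
noncomputable def deltaOf (X : Set G) : G :=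
  if h : ∃ d : G, (∀ x ∈ X, S.le x d) ∧ ∀ c : G, (∀ x ∈ X, S.le x c) → S.le d c
  then h.choose else 1

/-- the closure `X̄ = Div(Δ_X) ∩ 𝒜` of a set of atoms -/
noncomputable def closureOf (X : Set G) : Set G := S.Div (S.deltaOf X) ∩ S.atoms

/-- the subgroup `G_X` generated by the closure of `X` -/
noncomputable def GX (X : Set G) : Subgroup G := Subgroup.closure (S.closureOf X)

/-- the support of an element: the closure of the set of atoms appearing in atom
factorizations of its left denominator and left numerator -/
noncomputable def supp (x : G) : Set G :=
  if h : ∃ p : List G × List G,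
      (∀ a ∈ p.1, a ∈ S.atoms) ∧ (∀ a ∈ p.2, a ∈ S.atoms) ∧
      p.1.prod = S.DL x ∧ p.2.prod = S.NL x
  then S.closureOf ({a : G | a ∈ h.choose.1} ∪ {a : G | a ∈ h.choose.2})
  else ∅

/-- an LCM-Garside structure -/
structure IsLCM : Prop where
  delta_eq : S.delta = S.deltaOf S.atoms
  balanced : ∀ X ⊆ S.atoms, ∀ s ∈ S.pos,
    (S.le s (S.deltaOf X) ↔ S.deltaOf X * s⁻¹ ∈ S.pos)
  div_eq : ∀ X ⊆ S.atoms,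
    S.Div (S.deltaOf X) = S.Div S.delta ∩ {g : G | g ∈ S.GX X ∧ g ∈ S.pos}
  factor_closed : ∀ X ⊆ S.atoms, ∀ g : G, g ∈ S.GX X → g ∈ S.pos →
    ∀ a b : G, a ∈ S.pos → b ∈ S.pos → g = a * b → a ∈ S.GX X ∧ b ∈ S.GX X
  lattice_closed : ∀ X ⊆ S.atoms, ∀ a b : G, a ∈ S.GX X → b ∈ S.GX X →
    S.meet a b ∈ S.GX X ∧ S.join a b ∈ S.GX X
  fraction_closed : ∀ X ⊆ S.atoms, ∀ g : G, g ∈ S.GX X →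
    S.DL g ∈ S.GX X ∧ S.NL g ∈ S.GX X

/-- a standard parabolic subgroup: the subgroup generated by a saturated set of atoms -/
noncomputable def IsStandardParabolic (H : Subgroup G) : Prop :=
  ∃ X : Set G, X ⊆ S.atoms ∧ S.closureOf X = X ∧ H = S.GX X

/-- a parabolic subgroup: a conjugate of a standard parabolic subgroup -/
noncomputable def IsParabolic (H : Subgroup G) : Prop :=
  ∃ (P : Subgroup G) (c : G), S.IsStandardParabolic P ∧
    H = Subgroup.map (MulAut.conj c).toMonoidHom P

/-- the structure is support-preserving if conjugations between positive elements
conjugate the corresponding parabolic subgroups of the supports -/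
noncomputable def SupportPreserving : Prop :=
  ∀ y ∈ S.pos, ∀ z ∈ S.pos, ∀ α : G, α⁻¹ * y * α = z →
    Subgroup.map (MulAut.conj α⁻¹).toMonoidHom (S.GX (S.supp y)) = S.GX (S.supp z)

/-- `P` is the parabolic closure of `x` -/
noncomputable def IsParabolicClosure (x : G) (P : Subgroup G) : Prop :=
  S.IsParabolic P ∧ x ∈ P ∧ ∀ H : Subgroup G, S.IsParabolic H → x ∈ H → P ≤ H

end GarsideStructure


/-- `z` is the canonical central element of the parabolic subgroup `B`: for some
saturated set of atoms `X` and some `c` conjugating `G_X` to `B`, `z` is the conjugate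
by `c` of the smallest positive power of `Δ_X` which is central in `G_X`. -/
noncomputable def GarsideStructure.IsZof {G : Type*} [Group G]
    (S : GarsideStructure G) (B : Subgroup G) (z : G) : Prop :=
  ∃ X : Set G, X ⊆ S.atoms ∧ S.closureOf X = X ∧
    ∃ c : G, B = Subgroup.map (MulAut.conj c).toMonoidHom (S.GX X) ∧
      ∃ e : ℕ, 0 < e ∧ (∀ g ∈ S.GX X, Commute g (S.deltaOf X ^ e)) ∧
        (∀ e' : ℕ, 0 < e' → (∀ g ∈ S.GX X, Commute g (S.deltaOf X ^ e')) → e ≤ e') ∧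
        z = c * S.deltaOf X ^ e * c⁻¹

namespace GarsideStructure

variable {G : Type*} [Group G] (S : GarsideStructure G)

theorem le_refl (a : G) : S.le a a := by
  simp [le, S.pos.one_mem]

variable {S}

theorem le.trans {a b c : G} (hab : S.le a b) (hbc : S.le b c) : S.le a c := by
  have h := S.pos.mul_mem hab hbc
  rwa [show a⁻¹ * b * (b⁻¹ * c) = a⁻¹ * c by group] at h

theorem le.antisymm {a b : G} (hab : S.le a b) (hba : S.le b a) : a = b := by
  have h : (a⁻¹ * b)⁻¹ ∈ S.pos := by
    rwa [show (a⁻¹ * b)⁻¹ = b⁻¹ * a by group]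
  exact inv_mul_eq_one.mp (S.units_triv _ hab h)

theorem one_le_iff {a : G} : S.le 1 a ↔ a ∈ S.pos := by
  simp [le]

theorem le_mul_right (a : G) {b : G} (hb : b ∈ S.pos) : S.le a (a * b) := by
  simpa [le] using hb

theorem mul_le_mul_left_iff (c : G) {a b : G} : S.le (c * a) (c * b) ↔ S.le a b := by
  simp [le, mul_assoc]

theorem pos_of_le {a b : G} (ha : a ∈ S.pos) (hab : S.le a b) : b ∈ S.pos :=
  one_le_iff.mp ((one_le_iff.mpr ha).trans hab)

theorem atom_pos {a : G} (ha : a ∈ S.atoms) : a ∈ S.pos := ha.1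

theorem atom_le_delta {a : G} (ha : a ∈ S.atoms) : S.le a S.delta :=
  S.atoms_divide_delta a ha.1 ha.2.1 ha.2.2

variable (S) in
theorem atoms_finite : S.atoms.Finite :=
  S.divDelta_finite.subset fun _ ha => ⟨ha.1, atom_le_delta ha⟩

theorem list_prod_pos {l : List G} (hl : ∀ a ∈ l, a ∈ S.atoms) : l.prod ∈ S.pos :=
  S.pos.list_prod_mem fun a ha => atom_pos (hl a ha)

theorem exists_atom_list {g : G} (hg : g ∈ S.pos) :
    ∃ l : List G, (∀ a ∈ l, a ∈ S.atoms) ∧ l.prod = g := by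
  rw [← S.atoms_generate] at hg
  exact Submonoid.exists_list_of_mem_closure hg

theorem exists_atom_le {g : G} (hg : g ∈ S.pos) (hne : g ≠ 1) :
    ∃ a ∈ S.atoms, S.le a g := by
  obtain ⟨l, hl, rfl⟩ := exists_atom_list hg
  cases l with
  | nil => simp at hne
  | cons a l =>
    refine ⟨a, hl a (by simp), ?_⟩
    rw [List.prod_cons]
    exact le_mul_right a (list_prod_pos fun b hb => hl b (by simp [hb]))

theorem eq_nil_of_prod_eq_one {l : List G} (hl : ∀ a ∈ l, a ∈ S.atoms)
    (h : l.prod = 1) : l = [] := by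
  cases l with
  | nil => rfl
  | cons a l =>
    have ha := hl a (by simp)
    rw [List.prod_cons] at h
    have hp : l.prod ∈ S.pos := list_prod_pos fun b hb => hl b (by simp [hb])
    rw [eq_inv_of_mul_eq_one_right h] at hp
    exact absurd (S.units_triv a ha.1 hp) ha.2.1

theorem length_pos {ℓ : G → ℕ} (hmul : ∀ a ∈ S.pos, ∀ b ∈ S.pos, ℓ (a * b) = ℓ a + ℓ b)
    (hatom : ∀ a ∈ S.atoms, ℓ a = 1) {g : G} (hg : g ∈ S.pos) (hne : g ≠ 1) : 0 < ℓ g := by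
  obtain ⟨a, ha, hag⟩ := exists_atom_le hg hne
  have h := hmul a ha.1 _ hag
  rw [mul_inv_cancel_left, hatom a ha] at h
  omega

theorem exists_isLUB_of_finite {X : Set G} (hX : X.Finite) :
    X = ∅ ∨ ∃ d : G, (∀ x ∈ X, S.le x d) ∧ ∀ c : G, (∀ x ∈ X, S.le x c) → S.le d c := by
  induction X, hX using Set.Finite.induction_on with
  | empty => exact Or.inl rfl
  | @insert a X _ _ ih =>
    right
    rcases ih with rfl | ⟨d, hd, hleast⟩
    · exact ⟨a, by simp [S.le_refl], by simp⟩
    · refine ⟨S.join a d, ?_, fun c hc => ?_⟩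
      · rintro x (rfl | hx)
        · exact S.le_join_left _ _
        · exact (hd x hx).trans (S.le_join_right _ _)
      · exact S.join_le _ _ _ (hc a (by simp)) (hleast c fun x hx => hc x (by simp [hx]))

theorem deltaOf_isLeast {X : Set G} (hX : X ⊆ S.atoms) :
    S.deltaOf X ∈ S.pos ∧ (∀ x ∈ X, S.le x (S.deltaOf X)) ∧
      ∀ c ∈ S.pos, (∀ x ∈ X, S.le x c) → S.le (S.deltaOf X) c := by
  rcases X.eq_empty_or_nonempty with rfl | hne
  · have h1 : S.deltaOf (∅ : Set G) = 1 := by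
      unfold deltaOf
      split_ifs with h
      · have hs := h.choose_spec.2
        set d := h.choose
        have h2 : S.le d (d * d) := hs _ (by simp)
        have h3 : S.le d 1 := hs _ (by simp)
        exact (h3.antisymm (one_le_iff.mpr (by simpa [le] using h2)))
      · rfl
    rw [h1]
    exact ⟨S.pos.one_mem, by simp, fun c hc _ => one_le_iff.mpr hc⟩
  · have hex := (exists_isLUB_of_finite (S := S) (S.atoms_finite.subset hX)).resolve_left hne.ne_empty
    have hd : (∀ x ∈ X, S.le x (S.deltaOf X)) ∧
        ∀ c : G, (∀ x ∈ X, S.le x c) → S.le (S.deltaOf X) c := by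
      unfold deltaOf
      rw [dif_pos hex]
      exact hex.choose_spec
    obtain ⟨x, hx⟩ := hne
    exact ⟨pos_of_le (hX hx).1 (hd.1 x hx), hd.1, fun c _ hc => hd.2 c hc⟩

theorem deltaOf_pos {X : Set G} (hX : X ⊆ S.atoms) : S.deltaOf X ∈ S.pos :=
  (deltaOf_isLeast hX).1

theorem le_deltaOf {X : Set G} (hX : X ⊆ S.atoms) {x : G} (hx : x ∈ X) :
    S.le x (S.deltaOf X) :=
  (deltaOf_isLeast hX).2.1 x hx

theorem deltaOf_le {X : Set G} (hX : X ⊆ S.atoms) {c : G} (hc : c ∈ S.pos)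
    (h : ∀ x ∈ X, S.le x c) : S.le (S.deltaOf X) c :=
  (deltaOf_isLeast hX).2.2 c hc h

theorem subset_closureOf {X : Set G} (hX : X ⊆ S.atoms) : X ⊆ S.closureOf X :=
  fun _ hx => ⟨⟨(hX hx).1, le_deltaOf hX hx⟩, hX hx⟩

theorem deltaOf_mono {X Y : Set G} (hXY : X ⊆ Y) (hY : Y ⊆ S.atoms) :
    S.le (S.deltaOf X) (S.deltaOf Y) :=
  deltaOf_le (hXY.trans hY) (deltaOf_pos hY) fun _ hx => le_deltaOf hY (hXY hx)

theorem closureOf_mono {X Y : Set G} (hXY : X ⊆ Y) (hY : Y ⊆ S.atoms) :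
    S.closureOf X ⊆ S.closureOf Y :=
  fun _ ha => ⟨⟨ha.1.1, ha.1.2.trans (deltaOf_mono hXY hY)⟩, ha.2⟩

theorem GX_mono {X Y : Set G} (hXY : X ⊆ Y) (hY : Y ⊆ S.atoms) : S.GX X ≤ S.GX Y :=
  Subgroup.closure_mono (closureOf_mono hXY hY)

theorem subset_GX {X : Set G} (hX : X ⊆ S.atoms) {x : G} (hx : x ∈ X) : x ∈ S.GX X :=
  Subgroup.subset_closure (subset_closureOf hX hx)

namespace IsLCM

theorem deltaOf_mem (hLCM : S.IsLCM) {X : Set G} (hX : X ⊆ S.atoms) :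
    S.deltaOf X ∈ S.Div S.delta ∧ S.deltaOf X ∈ S.GX X := by
  have h : S.deltaOf X ∈ S.Div (S.deltaOf X) := ⟨deltaOf_pos hX, S.le_refl _⟩
  rw [hLCM.div_eq X hX] at h
  exact ⟨h.1, h.2.1⟩

theorem mem_closureOf_iff (hLCM : S.IsLCM) {X : Set G} (hX : X ⊆ S.atoms)
    {a : G} : a ∈ S.closureOf X ↔ a ∈ S.atoms ∧ a ∈ S.GX X := by
  rw [closureOf, hLCM.div_eq X hX]
  exact ⟨fun h => ⟨h.2, h.1.2.1⟩,
    fun h => ⟨⟨⟨h.1.1, atom_le_delta h.1⟩, h.2, h.1.1⟩, h.1⟩⟩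

theorem mem_GX_of_le (hLCM : S.IsLCM) {X : Set G} (hX : X ⊆ S.atoms)
    {g h : G} (hh : h ∈ S.GX X) (hg : g ∈ S.pos) (hgh : S.le g h) :
    g ∈ S.GX X :=
  (hLCM.factor_closed X hX h hh (pos_of_le hg hgh) g (g⁻¹ * h) hg hgh (by group)).1

theorem mem_GX_of_mem_list (hLCM : S.IsLCM) {X : Set G} (hX : X ⊆ S.atoms)
    {l : List G} (hl : ∀ a ∈ l, a ∈ S.atoms)
    (hprod : l.prod ∈ S.GX X) : ∀ a ∈ l, a ∈ S.GX X := by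
  induction l with
  | nil => simp
  | cons b l ih =>
    have hb := hl b (by simp)
    have hl' : ∀ a ∈ l, a ∈ S.atoms := fun a ha => hl a (by simp [ha])
    have h := hLCM.factor_closed X hX _ hprod (list_prod_pos hl) b l.prod hb.1
      (list_prod_pos hl') List.prod_cons
    intro a ha
    rcases List.mem_cons.mp ha with rfl | ha
    · exact h.1
    · exact ih hl' h.2 a ha

theorem conj_deltaOf_pos (hLCM : S.IsLCM) {X : Set G} (hX : X ⊆ S.atoms)
    {g : G} (hg : g ∈ S.GX X) (hpos : g ∈ S.pos) :
    (S.deltaOf X)⁻¹ * g * S.deltaOf X ∈ S.pos ∧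
      S.deltaOf X * g * (S.deltaOf X)⁻¹ ∈ S.pos := by
  set D := S.deltaOf X with hD
  obtain ⟨l, hl, rfl⟩ := exists_atom_list hpos
  have hmem := hLCM.mem_GX_of_mem_list hX hl hg
  clear hg hpos
  induction l with
  | nil => simp [S.pos.one_mem]
  | cons a l ih =>
    obtain ⟨ih₁, ih₂⟩ := ih (fun b hb => hl b (by simp [hb])) fun b hb => hmem b (by simp [hb])
    have ha := hl a (by simp)
    have haD : S.le a D :=
      ((hLCM.mem_closureOf_iff hX).mpr ⟨ha, hmem a (by simp)⟩).1.2
    have h₁ : D⁻¹ * a * D ∈ S.pos := by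
      have h : S.le (a⁻¹ * D) D :=
        (hLCM.balanced X hX _ haD).mpr (by simpa [← hD] using ha.1)
      simpa [le, mul_assoc] using h
    have h₂ : D * a * D⁻¹ ∈ S.pos := by
      have h : D * a⁻¹ ∈ S.pos := (hLCM.balanced X hX _ ha.1).mp haD
      have h' : D * (D * a⁻¹)⁻¹ ∈ S.pos :=
        (hLCM.balanced X hX _ h).mp (by simpa [le, ← hD] using ha.1)
      simpa [mul_assoc] using h'
    rw [List.prod_cons]
    constructor
    · rw [show D⁻¹ * (a * l.prod) * D = D⁻¹ * a * D * (D⁻¹ * l.prod * D) by group]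
      exact S.pos.mul_mem h₁ ih₁
    · rw [show D * (a * l.prod) * D⁻¹ = D * a * D⁻¹ * (D * l.prod * D⁻¹) by group]
      exact S.pos.mul_mem h₂ ih₂

theorem conj_deltaOf_le_iff (hLCM : S.IsLCM) {X : Set G} (hX : X ⊆ S.atoms)
    {g h : G} (hg : g ∈ S.GX X) (hh : h ∈ S.GX X) :
    S.le ((S.deltaOf X)⁻¹ * g * S.deltaOf X) ((S.deltaOf X)⁻¹ * h * S.deltaOf X) ↔
      S.le g h := by
  have hmem : g⁻¹ * h ∈ S.GX X := mul_mem (inv_mem hg) hh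
  have hD := (hLCM.deltaOf_mem hX).2
  set D := S.deltaOf X
  have heq : (D⁻¹ * g * D)⁻¹ * (D⁻¹ * h * D) = D⁻¹ * (g⁻¹ * h) * D := by group
  unfold le
  rw [heq]
  refine ⟨fun hp => ?_, fun hp => (hLCM.conj_deltaOf_pos hX hmem hp).1⟩
  have hp' : D * (D⁻¹ * (g⁻¹ * h) * D) * D⁻¹ ∈ S.pos :=
    (hLCM.conj_deltaOf_pos hX (mul_mem (mul_mem (inv_mem hD) hmem) hD) hp).2
  rwa [show D * (D⁻¹ * (g⁻¹ * h) * D) * D⁻¹ = g⁻¹ * h by group] at hp'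

theorem conj_deltaOf_mem_atoms_iff (hLCM : S.IsLCM) {X : Set G} (hX : X ⊆ S.atoms)
    {g : G} (hg : g ∈ S.GX X) :
    (S.deltaOf X)⁻¹ * g * S.deltaOf X ∈ S.atoms ↔ g ∈ S.atoms := by
  have hD := (hLCM.deltaOf_mem hX).2
  have hle : ∀ {g h : G}, g ∈ S.GX X → h ∈ S.GX X → (_ ↔ _) :=
    hLCM.conj_deltaOf_le_iff hX
  set D := S.deltaOf X
  have hpos : ∀ {k}, k ∈ S.GX X → (D⁻¹ * k * D ∈ S.pos ↔ k ∈ S.pos) := fun {k} hk => by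
    have h := hle (one_mem _) hk
    rwa [mul_one, inv_mul_cancel, one_le_iff, one_le_iff] at h
  have hone : ∀ {k}, D⁻¹ * k * D = 1 ↔ k = 1 := fun {k} => by
    rw [mul_eq_one_iff_eq_inv, inv_mul_eq_iff_eq_mul, mul_inv_cancel]
  constructor
  · rintro ⟨h₁, h₂, h₃⟩
    refine ⟨(hpos hg).mp h₁, fun h => h₂ (hone.mpr h), fun b hb hbg => ?_⟩
    have hbX := hLCM.mem_GX_of_le hX hg hb hbg
    rcases h₃ _ ((hpos hbX).mpr hb) ((hle hbX hg).mpr hbg) with h | h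
    · exact Or.inl (hone.mp h)
    · exact Or.inr (by simpa using h)
  · rintro ⟨h₁, h₂, h₃⟩
    refine ⟨(hpos hg).mpr h₁, fun h => h₂ (hone.mp h), fun b hb hbg => ?_⟩
    have hbX := hLCM.mem_GX_of_le hX (mul_mem (mul_mem (inv_mem hD) hg) hD) hb hbg
    have hkX : D * b * D⁻¹ ∈ S.GX X := mul_mem (mul_mem hD hbX) (inv_mem hD)
    have hbk : b = D⁻¹ * (D * b * D⁻¹) * D := by group
    rw [hbk] at hb hbg
    rcases h₃ _ ((hpos hkX).mp hb) ((hle hkX hg).mp hbg) with h | h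
    · left
      rw [hbk, h]
      group
    · right
      rw [hbk, h]

end IsLCM

theorem map_conj_inv_eq_iff {H K : Subgroup G} {c : G} :
    Subgroup.map (MulAut.conj c⁻¹).toMonoidHom H = K ↔ ∀ g, g ∈ H ↔ c⁻¹ * g * c ∈ K := by
  constructor
  · rintro rfl g
    simp [Subgroup.mem_map]
  · intro h
    ext g
    constructor
    · rintro ⟨k, hk, rfl⟩
      simpa using (h k).mp hk
    · intro hg
      refine ⟨c * g * c⁻¹, (h _).mpr ?_, by simp [mul_assoc]⟩
      rwa [show c⁻¹ * (c * g * c⁻¹) * c = g by group]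

/-- Conjugation by `Δ_W` carries a standard parabolic subgroup `G_X` with `X ⊆ W` to a
standard parabolic subgroup, and `Δ_X` to its Garside element. -/
theorem IsLCM.exists_conj_saturated (hLCM : S.IsLCM) {X W : Set G} (hXW : X ⊆ W)
    (hW : W ⊆ S.atoms) (hsat : S.closureOf X = X) :
    ∃ X' ⊆ S.atoms, S.closureOf X' = X' ∧
      S.deltaOf X' = (S.deltaOf W)⁻¹ * S.deltaOf X * S.deltaOf W ∧
      ∀ g, g ∈ S.GX X ↔ (S.deltaOf W)⁻¹ * g * S.deltaOf W ∈ S.GX X' := by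
  have hX := hXW.trans hW
  have hD := (hLCM.deltaOf_mem hW).2
  have hXmem : ∀ {x}, x ∈ X → x ∈ S.GX W := fun hx => subset_GX hW (hXW hx)
  have hΔX : S.deltaOf X ∈ S.GX W := GX_mono hXW hW (hLCM.deltaOf_mem hX).2
  have hle : ∀ {g h : G}, g ∈ S.GX W → h ∈ S.GX W → (_ ↔ _) :=
    hLCM.conj_deltaOf_le_iff hW
  have hatom : ∀ {g : G}, g ∈ S.GX W → (_ ↔ _) := hLCM.conj_deltaOf_mem_atoms_iff hW
  set D := S.deltaOf W
  have hsurj : ∀ {g}, g ∈ S.GX W → ∃ k ∈ S.GX W, g = D⁻¹ * k * D := fun {g} hg =>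
    ⟨D * g * D⁻¹, mul_mem (mul_mem hD hg) (inv_mem hD), by group⟩
  set X' : Set G := (fun x => D⁻¹ * x * D) '' X with hX'def
  have hX' : X' ⊆ S.atoms := by
    rintro _ ⟨x, hx, rfl⟩
    exact (hatom (hXmem hx)).mpr (hX hx)
  have hdpos : D⁻¹ * S.deltaOf X * D ∈ S.pos :=
    (hLCM.conj_deltaOf_pos hW hΔX (deltaOf_pos hX)).1
  have hdX' : D⁻¹ * S.deltaOf X * D ∈ S.GX W := mul_mem (mul_mem (inv_mem hD) hΔX) hD
  have hdelta : S.deltaOf X' = D⁻¹ * S.deltaOf X * D := by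
    have hub : S.le (S.deltaOf X') (D⁻¹ * S.deltaOf X * D) := by
      refine deltaOf_le hX' hdpos ?_
      rintro _ ⟨x, hx, rfl⟩
      exact (hle (hXmem hx) hΔX).mpr (le_deltaOf hX hx)
    refine hub.antisymm ?_
    obtain ⟨k, hk, hkeq⟩ := hsurj (hLCM.mem_GX_of_le hW hdX' (deltaOf_pos hX') hub)
    have hone : S.le (D⁻¹ * 1 * D) (D⁻¹ * k * D) := by
      rw [← hkeq, mul_one, inv_mul_cancel]
      exact one_le_iff.mpr (deltaOf_pos hX')
    rw [hkeq]
    refine (hle hΔX hk).mpr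
      (deltaOf_le hX (one_le_iff.mp ((hle (one_mem _) hk).mp hone)) fun x hx => ?_)
    refine (hle (hXmem hx) hk).mp ?_
    rw [← hkeq]
    exact le_deltaOf hX' ⟨x, hx, rfl⟩
  have hsat' : S.closureOf X' = X' := by
    refine Set.Subset.antisymm (fun b hb => ?_) (subset_closureOf hX')
    have hbd := hb.1.2
    rw [hdelta] at hbd
    obtain ⟨k, hk, rfl⟩ := hsurj (hLCM.mem_GX_of_le hW hdX' hb.1.1 hbd)
    have hka := (hatom hk).mp hb.2
    refine ⟨k, ?_, rfl⟩
    rw [← hsat]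
    exact ⟨⟨hka.1, (hle hk hΔX).mp hbd⟩, hka⟩
  refine ⟨X', hX', hsat', hdelta, map_conj_inv_eq_iff.mp ?_⟩
  rw [GX, GX, hsat, hsat', MonoidHom.map_closure, hX'def]
  congr 1
  ext g
  simp

/-- If an atom outside `X` is a prefix of `Δ_X ^ (k + 1) * α`, then some atom outside `X` is
a prefix of `Δ_X * α`. -/
theorem IsLCM.exists_atom_le_deltaOf_mul (hLCM : S.IsLCM)
    (hsf : ∀ s ∈ S.Div S.delta, ∀ u ∈ S.pos, ∀ v ∈ S.pos, ∀ a ∈ S.atoms,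
      s ≠ u * a * a * v)
    {X : Set G} (hX : X ⊆ S.atoms) (hsat : S.closureOf X = X) {α : G} (hα : α ∈ S.pos)
    (k : ℕ) (h : ∃ a ∈ S.atoms, a ∉ X ∧ S.le a (S.deltaOf X ^ (k + 1) * α)) :
    ∃ a ∈ S.atoms, a ∉ X ∧ S.le a (S.deltaOf X * α) := by
  induction k with
  | zero => simpa using h
  | succ k ih =>
    apply ih
    obtain ⟨a, ha, haX, hle⟩ := h
    have hW : insert a X ⊆ S.atoms := Set.insert_subset ha hX
    have hXD : S.le (S.deltaOf X) (S.deltaOf (insert a X)) :=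
      deltaOf_mono (Set.subset_insert a X) hW
    have hDle : S.le (S.deltaOf (insert a X)) (S.deltaOf X ^ (k + 1 + 1) * α) := by
      have hp : S.deltaOf X ^ (k + 1) * α ∈ S.pos :=
        S.pos.mul_mem (S.pos.pow_mem (deltaOf_pos hX) _) hα
      refine deltaOf_le hW (pos_of_le ha.1 hle) ?_
      rintro x (rfl | hx)
      · exact hle
      · rw [pow_succ', mul_assoc]
        exact (le_deltaOf hX hx).trans (le_mul_right _ hp)
    obtain ⟨b, hb, hbr⟩ := exists_atom_le hXD fun h => haX <| by
      rw [← hsat]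
      refine ⟨⟨ha.1, ?_⟩, ha⟩
      rw [inv_mul_eq_one.mp h]
      exact le_deltaOf hW (Set.mem_insert a X)
    refine ⟨b, hb, fun hbX => ?_, hbr.trans ?_⟩
    · refine hsf _ (hLCM.deltaOf_mem hW).1 (S.deltaOf X * b⁻¹)
        ((hLCM.balanced X hX b hb.1).mp (le_deltaOf hX hbX)) _ hbr b hb ?_
      group
    · rw [← mul_le_mul_left_iff (S.deltaOf X), mul_inv_cancel_left, ← mul_assoc, ← pow_succ']
      exact hDle

/-- A positive element conjugating `G_X` to `G_Y` and a central power of `Δ_X` to a positive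
element conjugates that power of `Δ_X` to the same power of `Δ_Y`. -/
theorem IsLCM.conj_deltaOf_pow_of_pos (hLCM : S.IsLCM)
    {ℓ : G → ℕ} (hmul : ∀ a ∈ S.pos, ∀ b ∈ S.pos, ℓ (a * b) = ℓ a + ℓ b)
    (hatom : ∀ a ∈ S.atoms, ℓ a = 1)
    (hsf : ∀ s ∈ S.Div S.delta, ∀ u ∈ S.pos, ∀ v ∈ S.pos, ∀ a ∈ S.atoms,
      s ≠ u * a * a * v)
    {Y : Set G} (hY : Y ⊆ S.atoms) (hsatY : S.closureOf Y = Y) (k : ℕ)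
    {X : Set G} (hX : X ⊆ S.atoms) (hsat : S.closureOf X = X) {α : G} (hα : α ∈ S.pos)
    (hcomm : ∀ g ∈ S.GX X, Commute g (S.deltaOf X ^ (k + 1)))
    (hconj : ∀ g, g ∈ S.GX X ↔ α⁻¹ * g * α ∈ S.GX Y)
    (hpos : α⁻¹ * S.deltaOf X ^ (k + 1) * α ∈ S.pos) :
    α⁻¹ * S.deltaOf X ^ (k + 1) * α = S.deltaOf Y ^ (k + 1) := by
  induction hn : ℓ α using Nat.strong_induction_on generalizing X α with
  | _ n ih =>
  subst hn
  by_cases hα1 : α = 1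
  · subst hα1
    have hXY : X = Y := by
      rw [← hsat, ← hsatY]
      ext a
      rw [hLCM.mem_closureOf_iff hX, hLCM.mem_closureOf_iff hY, hconj a]
      simp
    simp [hXY]
  have hstep : ∀ r ∈ S.pos, r ≠ 1 → S.le r α → ℓ (r⁻¹ * α) < ℓ α := by
    intro r hr hne hle
    have h := hmul r hr _ hle
    rw [mul_inv_cancel_left] at h
    have := length_pos hmul hatom hr hne
    omega
  by_cases hx : ∃ x ∈ X, S.le x α
  · obtain ⟨x, hx, hxα⟩ := hx
    have hxG : x ∈ S.GX X := subset_GX hX hx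
    have heq : ∀ g, (x⁻¹ * α)⁻¹ * g * (x⁻¹ * α) = α⁻¹ * (x * g * x⁻¹) * α := fun g => by group
    have hz : x * S.deltaOf X ^ (k + 1) * x⁻¹ = S.deltaOf X ^ (k + 1) := by
      rw [(hcomm x hxG).eq, mul_inv_cancel_right]
    have h := ih _ (hstep x (hX hx).1 (hX hx).2.1 hxα) hX hsat hxα hcomm
      (fun g => by
        rw [heq, ← hconj, Subgroup.mul_mem_cancel_right _ (inv_mem hxG),
          Subgroup.mul_mem_cancel_left _ hxG])
      (by rwa [heq, hz]) rfl
    rwa [heq, hz] at h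
  · push Not at hx
    have hαle : S.le α (S.deltaOf X ^ (k + 1) * α) := by
      simpa [le, mul_assoc] using hpos
    obtain ⟨a₀, ha₀, ha₀α⟩ := exists_atom_le hα hα1
    obtain ⟨a, ha, haX, hale⟩ := hLCM.exists_atom_le_deltaOf_mul hsf hX hsat hα k
      ⟨a₀, ha₀, fun h => hx a₀ h ha₀α, ha₀α.trans hαle⟩
    have hW : insert a X ⊆ S.atoms := Set.insert_subset ha hX
    have hDle : S.le (S.deltaOf (insert a X)) (S.deltaOf X * α) := by
      refine deltaOf_le hW (pos_of_le ha.1 hale) ?_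
      rintro x (rfl | hx)
      · exact hale
      · exact (le_deltaOf hX hx).trans (le_mul_right _ hα)
    obtain ⟨X', hX', hsat', hdelta, hGX⟩ :=
      hLCM.exists_conj_saturated (Set.subset_insert a X) hW hsat
    have hr : (S.deltaOf X)⁻¹ * S.deltaOf (insert a X) ∈ S.pos :=
      deltaOf_mono (Set.subset_insert a X) hW
    have hr1 : (S.deltaOf X)⁻¹ * S.deltaOf (insert a X) ≠ 1 := fun h => haX <| by
      rw [← hsat]
      refine ⟨⟨ha.1, ?_⟩, ha⟩
      rw [inv_mul_eq_one.mp h]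
      exact le_deltaOf hW (Set.mem_insert a X)
    have hΔ := (hLCM.deltaOf_mem hX).2
    set D := S.deltaOf (insert a X)
    set E := S.deltaOf X
    have hrα : S.le (E⁻¹ * D) α := by
      rw [← mul_le_mul_left_iff E, mul_inv_cancel_left]
      exact hDle
    have hpow : S.deltaOf X' ^ (k + 1) = D⁻¹ * E ^ (k + 1) * D := by
      rw [hdelta]
      simpa using conj_pow (a := D⁻¹) (b := E) (i := k + 1)
    have hz : ((E⁻¹ * D)⁻¹ * α)⁻¹ * S.deltaOf X' ^ (k + 1) * ((E⁻¹ * D)⁻¹ * α) =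
        α⁻¹ * E ^ (k + 1) * α := by
      have hE : E⁻¹ * E ^ (k + 1) * E = E ^ (k + 1) := by
        rw [mul_assoc, ← pow_succ, pow_succ', inv_mul_cancel_left]
      rw [hpow]
      calc _ = α⁻¹ * (E⁻¹ * E ^ (k + 1) * E) * α := by group
        _ = _ := by rw [hE]
    have h := ih _ (hstep _ hr hr1 hrα) hX' hsat' hrα
      (fun g hg => by
        have hg' : D * g * D⁻¹ ∈ S.GX X := (hGX _).mpr (by
          rwa [show D⁻¹ * (D * g * D⁻¹) * D = g by group])
        have hc := (hcomm _ hg').eq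
        rw [hpow]
        calc g * (D⁻¹ * E ^ (k + 1) * D) = D⁻¹ * ((D * g * D⁻¹) * E ^ (k + 1)) * D := by
              group
          _ = D⁻¹ * (E ^ (k + 1) * (D * g * D⁻¹)) * D := by rw [hc]
          _ = D⁻¹ * E ^ (k + 1) * D * g := by group)
      (fun g => by
        rw [show ((E⁻¹ * D)⁻¹ * α)⁻¹ * g * ((E⁻¹ * D)⁻¹ * α) =
          α⁻¹ * (E⁻¹ * (D * g * D⁻¹) * E) * α by group, ← hconj,
          Subgroup.mul_mem_cancel_right _ hΔ, Subgroup.mul_mem_cancel_left _ (inv_mem hΔ),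
          hGX, show D⁻¹ * (D * g * D⁻¹) * D = g by group])
      (by rwa [hz]) rfl
    rwa [hz] at h

variable (S) in
/-- Every element becomes positive after multiplication by a suitable central element. -/
theorem exists_central_mul_pos (x : G) : ∃ t ∈ Subgroup.center G, x * t ∈ S.pos := by
  obtain ⟨n, hn, hc⟩ := S.central_power
  obtain ⟨p, q, -, hp, -⟩ := S.delta_bounds x
  have hcen : S.delta ^ (n * p.natAbs) ∈ Subgroup.center G := by
    rw [pow_mul]
    exact pow_mem hc _
  refine ⟨_, hcen, ?_⟩
  have hnp : (0 : ℤ) ≤ p + (n * p.natAbs : ℕ) := by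
    have h := Nat.le_mul_of_pos_left p.natAbs hn
    omega
  obtain ⟨m, hm⟩ := Int.eq_ofNat_of_zero_le hnp
  have heq : x * S.delta ^ (n * p.natAbs) = S.delta ^ m * ((S.delta ^ p)⁻¹ * x) := by
    rw [Subgroup.mem_center_iff.mp hcen x, ← zpow_natCast S.delta m, ← hm, add_comm,
      zpow_add, zpow_natCast, mul_assoc, mul_inv_cancel_left]
  rw [heq]
  exact S.pos.mul_mem (S.pos.pow_mem S.delta_pos m) hp

/-- An element which is central in `G_Y` and conjugate to a positive element is positive. -/
theorem IsLCM.pos_of_commute_of_conj_pos (hLCM : S.IsLCM)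
    {ℓ : G → ℕ} (hmul : ∀ a ∈ S.pos, ∀ b ∈ S.pos, ℓ (a * b) = ℓ a + ℓ b)
    (hatom : ∀ a ∈ S.atoms, ℓ a = 1) {Y : Set G} (hY : Y ⊆ S.atoms) {y : G}
    (hy : y ∈ S.GX Y) (hcomm : ∀ g ∈ S.GX Y, Commute g y) {u : G}
    (hu : u⁻¹ * y * u ∈ S.pos) : y ∈ S.pos := by
  wlog hupos : u ∈ S.pos generalizing u
  · obtain ⟨t, ht, hut⟩ := S.exists_central_mul_pos u
    refine this (u := u * t) ?_ hut
    rwa [show (u * t)⁻¹ * y * (u * t) = t⁻¹ * (u⁻¹ * y * u * t) by group,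
      Subgroup.mem_center_iff.mp ht, inv_mul_cancel_left]
  set w := S.join y⁻¹ 1
  have hw : w ∈ S.GX Y := (hLCM.lattice_closed Y hY _ _ (inv_mem hy) (one_mem _)).2
  have hwpos : w ∈ S.pos := one_le_iff.mp (S.le_join_right _ _)
  have hpow : ∀ n : ℕ, (w ^ n)⁻¹ * u ∈ S.pos := by
    intro n
    induction n with
    | zero => simpa using hupos
    | succ n ih =>
      have hc := (hcomm _ (pow_mem hw n)).inv_left.eq
      have h : S.le w ((w ^ n)⁻¹ * u) := by
        refine S.join_le _ _ _ ?_ (by simpa using ih)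
        have hp := S.pos.mul_mem ih hu
        rw [show (w ^ n)⁻¹ * u * (u⁻¹ * y * u) = (w ^ n)⁻¹ * y * u by group, hc] at hp
        simpa [mul_assoc] using hp
      unfold le at h
      rwa [pow_succ, mul_inv_rev, mul_assoc]
  have hw1 : w = 1 := by
    by_contra hne
    have hlen := length_pos hmul hatom hwpos hne
    have hlenpow : ∀ n : ℕ, n ≤ ℓ (w ^ n) := by
      intro n
      induction n with
      | zero => exact Nat.zero_le _
      | succ n ih =>
        rw [pow_succ, hmul _ (S.pos.pow_mem hwpos n) _ hwpos]
        omega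
    have h := hmul _ (S.pos.pow_mem hwpos (ℓ u + 1)) _ (hpow (ℓ u + 1))
    rw [mul_inv_cancel_left] at h
    have := hlenpow (ℓ u + 1)
    omega
  have h : S.le y⁻¹ w := S.le_join_left _ _
  rw [hw1] at h
  simpa [le] using h

/-- An element conjugating `G_X` to `G_Y` conjugates central powers of `Δ_X` to the same powers
of `Δ_Y`. -/
theorem IsLCM.conj_deltaOf_pow (hLCM : S.IsLCM)
    {ℓ : G → ℕ} (hmul : ∀ a ∈ S.pos, ∀ b ∈ S.pos, ℓ (a * b) = ℓ a + ℓ b)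
    (hatom : ∀ a ∈ S.atoms, ℓ a = 1)
    (hsf : ∀ s ∈ S.Div S.delta, ∀ u ∈ S.pos, ∀ v ∈ S.pos, ∀ a ∈ S.atoms,
      s ≠ u * a * a * v)
    {X Y : Set G} (hX : X ⊆ S.atoms) (hsatX : S.closureOf X = X)
    (hY : Y ⊆ S.atoms) (hsatY : S.closureOf Y = Y) {α : G}
    (hconj : ∀ g, g ∈ S.GX X ↔ α⁻¹ * g * α ∈ S.GX Y) {e : ℕ} (he : 0 < e)
    (hcomm : ∀ g ∈ S.GX X, Commute g (S.deltaOf X ^ e)) :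
    α⁻¹ * S.deltaOf X ^ e * α = S.deltaOf Y ^ e ∧
      ∀ g ∈ S.GX Y, Commute g (S.deltaOf Y ^ e) := by
  obtain ⟨k, rfl⟩ : ∃ k, e = k + 1 := ⟨e - 1, by omega⟩
  have hcommY : ∀ g ∈ S.GX Y, Commute g (α⁻¹ * S.deltaOf X ^ (k + 1) * α) := by
    intro g hg
    have hg' : α * g * α⁻¹ ∈ S.GX X := (hconj _).mpr (by
      rwa [show α⁻¹ * (α * g * α⁻¹) * α = g by group])
    have hc := (hcomm _ hg').eq
    calc g * (α⁻¹ * S.deltaOf X ^ (k + 1) * α)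
        = α⁻¹ * ((α * g * α⁻¹) * S.deltaOf X ^ (k + 1)) * α := by group
      _ = α⁻¹ * (S.deltaOf X ^ (k + 1) * (α * g * α⁻¹)) * α := by rw [hc]
      _ = α⁻¹ * S.deltaOf X ^ (k + 1) * α * g := by group
  have hpos : α⁻¹ * S.deltaOf X ^ (k + 1) * α ∈ S.pos := by
    refine hLCM.pos_of_commute_of_conj_pos hmul hatom hY
      ((hconj _).mp (pow_mem (hLCM.deltaOf_mem hX).2 _)) hcommY (u := α⁻¹) ?_
    rw [show α⁻¹⁻¹ * (α⁻¹ * S.deltaOf X ^ (k + 1) * α) * α⁻¹ = S.deltaOf X ^ (k + 1) by group]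
    exact S.pos.pow_mem (deltaOf_pos hX) _
  have heq : α⁻¹ * S.deltaOf X ^ (k + 1) * α = S.deltaOf Y ^ (k + 1) := by
    obtain ⟨t, ht, hαt⟩ := S.exists_central_mul_pos α
    have hz : ∀ g, (α * t)⁻¹ * g * (α * t) = α⁻¹ * g * α := fun g => by
      rw [show (α * t)⁻¹ * g * (α * t) = t⁻¹ * (α⁻¹ * g * α * t) by group,
        Subgroup.mem_center_iff.mp ht, inv_mul_cancel_left]
    rw [← hz]
    exact hLCM.conj_deltaOf_pow_of_pos hmul hatom hsf hY hsatY k hX hsatX hαt hcomm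
      (fun g => by rw [hz, hconj]) (by rwa [hz])
  exact ⟨heq, heq ▸ hcommY⟩

theorem IsLCM.supp_deltaOf_pow (hLCM : S.IsLCM) {X : Set G} (hX : X ⊆ S.atoms)
    (hsat : S.closureOf X = X) {e : ℕ} (he : 0 < e) : S.supp (S.deltaOf X ^ e) = X := by
  have hpos : S.deltaOf X ^ e ∈ S.pos := S.pos.pow_mem (deltaOf_pos hX) e
  have hDL : S.DL (S.deltaOf X ^ e) = 1 := by
    have h : S.meet 1 (S.deltaOf X ^ e) = 1 :=
      le.antisymm (S := S) (S.meet_le_left _ _)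
        (S.le_meet _ _ _ (S.le_refl 1) (one_le_iff.mpr hpos))
    rw [DL, h, inv_one]
  have hNL : S.NL (S.deltaOf X ^ e) = S.deltaOf X ^ e := by rw [NL, hDL, one_mul]
  have hex : ∃ p : List G × List G,
      (∀ a ∈ p.1, a ∈ S.atoms) ∧ (∀ a ∈ p.2, a ∈ S.atoms) ∧
      p.1.prod = S.DL (S.deltaOf X ^ e) ∧ p.2.prod = S.NL (S.deltaOf X ^ e) := by
    obtain ⟨l, hl, hprod⟩ := exists_atom_list hpos
    exact ⟨([], l), by simp, hl, by simp [hDL], by simp [hNL, hprod]⟩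
  unfold supp
  rw [dif_pos hex]
  obtain ⟨h₁, h₂, h₃, h₄⟩ := hex.choose_spec
  replace h₄ := h₄.trans hNL
  rw [eq_nil_of_prod_eq_one h₁ (h₃.trans hDL)]
  set l := hex.choose.2
  have hempty : ({a : G | a ∈ ([] : List G)} ∪ {a : G | a ∈ l}) = {a : G | a ∈ l} := by simp
  rw [hempty]
  have hZ : {a : G | a ∈ l} ⊆ S.atoms := h₂
  have hmem : l.prod ∈ S.GX X := h₄ ▸ pow_mem (hLCM.deltaOf_mem hX).2 e
  have hZX : {a : G | a ∈ l} ⊆ X := fun a ha => by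
    rw [← hsat, hLCM.mem_closureOf_iff hX]
    exact ⟨h₂ a ha, hLCM.mem_GX_of_mem_list hX h₂ hmem a ha⟩
  refine Set.Subset.antisymm (hsat ▸ closureOf_mono hZX hX) fun x hx => ?_
  rw [hLCM.mem_closureOf_iff hZ]
  refine ⟨hX hx, hLCM.mem_GX_of_le hZ (h := l.prod)
    (list_prod_mem fun a ha => subset_GX hZ ha) (hX hx).1 ?_⟩
  obtain ⟨k, rfl⟩ : ∃ k, e = k + 1 := ⟨e - 1, by omega⟩
  rw [h₄, pow_succ']
  exact (le_deltaOf hX hx).trans (le_mul_right _ (S.pos.pow_mem (deltaOf_pos hX) k))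

end GarsideStructure

/-- two parabolic subgroups are conjugate by `c` if and only if their
canonical central elements are conjugate by `c`. -/
theorem garside_conjugate_parabolic_iff_conjugate_z {G : Type*} [Group G]
    (S : GarsideStructure G) (hLCM : S.IsLCM) (hsp : S.SupportPreserving)
    (hhom : ∃ ℓ : G → ℕ,
      (∀ a ∈ S.pos, ∀ b ∈ S.pos, ℓ (a * b) = ℓ a + ℓ b) ∧ ∀ a ∈ S.atoms, ℓ a = 1)
    (hsf : ∀ s ∈ S.Div S.delta, ∀ u ∈ S.pos, ∀ v ∈ S.pos, ∀ a ∈ S.atoms,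
      s ≠ u * a * a * v)
    (hcent : ∀ X : Set G, X ⊆ S.atoms → S.closureOf X = X →
      ∃ e : ℕ, 0 < e ∧ ∀ g ∈ S.GX X, Commute g (S.deltaOf X ^ e))
    (B₁ B₂ : Subgroup G) (h₁ : S.IsParabolic B₁) (h₂ : S.IsParabolic B₂)
    (z₁ z₂ : G) (hz₁ : S.IsZof B₁ z₁) (hz₂ : S.IsZof B₂ z₂) (c : G) :
    Subgroup.map (MulAut.conj c⁻¹).toMonoidHom B₁ = B₂ ↔ c⁻¹ * z₁ * c = z₂ := by
  obtain ⟨X, hX, hsatX, c₁, rfl, e, he, hcomm₁, hmin₁, rfl⟩ := hz₁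
  obtain ⟨Y, hY, hsatY, c₂, rfl, f, hf, hcomm₂, hmin₂, rfl⟩ := hz₂
  obtain ⟨ℓ, hmul, hatom⟩ := hhom
  have hmem : ∀ (a g : G) (H : Subgroup G),
      g ∈ Subgroup.map (MulAut.conj a).toMonoidHom H ↔ a⁻¹ * g * a ∈ H := fun a g H => by
    have h := (GarsideStructure.map_conj_inv_eq_iff (H := H) (c := a⁻¹)).mp rfl (a⁻¹ * g * a)
    rw [h, inv_inv, show a * (a⁻¹ * g * a) * a⁻¹ = g by group]
  have hsub : Subgroup.map (MulAut.conj c⁻¹).toMonoidHom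
        (Subgroup.map (MulAut.conj c₁).toMonoidHom (S.GX X)) =
        Subgroup.map (MulAut.conj c₂).toMonoidHom (S.GX Y) ↔
      Subgroup.map (MulAut.conj (c₁⁻¹ * c * c₂)⁻¹).toMonoidHom (S.GX X) = S.GX Y := by
    rw [GarsideStructure.map_conj_inv_eq_iff, GarsideStructure.map_conj_inv_eq_iff]
    simp only [hmem]
    constructor
    · intro h g
      have := h (c₁ * g * c₁⁻¹)
      rwa [show c₁⁻¹ * (c₁ * g * c₁⁻¹) * c₁ = g by group,
        show c₂⁻¹ * (c⁻¹ * (c₁ * g * c₁⁻¹) * c) * c₂ =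
          (c₁⁻¹ * c * c₂)⁻¹ * g * (c₁⁻¹ * c * c₂) by group] at this
    · intro h g
      rw [h, show (c₁⁻¹ * c * c₂)⁻¹ * (c₁⁻¹ * g * c₁) * (c₁⁻¹ * c * c₂) =
        c₂⁻¹ * (c⁻¹ * g * c) * c₂ by group]
  have helt : c⁻¹ * (c₁ * S.deltaOf X ^ e * c₁⁻¹) * c = c₂ * S.deltaOf Y ^ f * c₂⁻¹ ↔
      (c₁⁻¹ * c * c₂)⁻¹ * S.deltaOf X ^ e * (c₁⁻¹ * c * c₂) = S.deltaOf Y ^ f := by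
    rw [eq_mul_inv_iff_mul_eq, ← inv_mul_eq_iff_eq_mul]
    simp only [mul_inv_rev, inv_inv, mul_assoc]
  rw [hsub, helt]
  set α := c₁⁻¹ * c * c₂
  constructor
  · intro h
    have hconj := GarsideStructure.map_conj_inv_eq_iff.mp h
    have hconj' : ∀ g, g ∈ S.GX Y ↔ α⁻¹⁻¹ * g * α⁻¹ ∈ S.GX X := fun g => by
      rw [hconj, show α⁻¹ * (α⁻¹⁻¹ * g * α⁻¹) * α = g by group]
    obtain ⟨heq, hcY⟩ :=
      hLCM.conj_deltaOf_pow hmul hatom hsf hX hsatX hY hsatY hconj he hcomm₁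
    obtain ⟨-, hcX⟩ :=
      hLCM.conj_deltaOf_pow hmul hatom hsf hY hsatY hX hsatX hconj' hf hcomm₂
    rw [heq, le_antisymm (hmin₁ f hf hcX) (hmin₂ e he hcY)]
  · intro h
    have hs := hsp _ (S.pos.pow_mem (GarsideStructure.deltaOf_pos hX) e) _
      (S.pos.pow_mem (GarsideStructure.deltaOf_pos hY) f) α h
    rwa [hLCM.supp_deltaOf_pow hX hsatX he, hLCM.supp_deltaOf_pow hY hsatY hf] at hs
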